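/- Let H be a complex Hilbert space, let M be a von Neumann algebra acting on H, and let Ω be a compact Hausdorff space. Then every 2-local derivation Δ : C(Ω,M) → C(Ω,M) is linear and a derivation. -/

import Mathlib

set_option maxHeartbeats 1000000
set_option synthInstance.maxHeartbeats 1000000

/-- A (complex-linear) derivation on a complex normed algebra. -/
def IsCDerivation {B : Type*} [NonUnitalNormedRing B] [NormedSpace ℂ B] (D : B → B) : Prop :=
  (∀ x y : B, D (x + y) = D x + D y) ∧ (∀ (c : ℂ) (x : B), D (c • x) = c • D x) ∧
  (∀ x y : B, D (x * y) = D x * y + x * D y)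

def Is2LocalDerivation {B : Type*} [NonUnitalNormedRing B] [NormedSpace ℂ B]
    (Δ : B → B) : Prop :=
  ∀ x y : B, ∃ D : B → B, IsCDerivation D ∧ Δ x = D x ∧ Δ y = D y

instance {H : Type*} [NormedAddCommGroup H] [InnerProductSpace ℂ H] [CompleteSpace H] :
    SMulMemClass (VonNeumannAlgebra H) ℂ (H →L[ℂ] H) where
  smul_mem {M} c x hx := M.toSubalgebra.smul_mem hx c

/-!
Let `Δ` be a 2-local derivation of a von Neumann algebra. If `e` is an idempotent with `Δ e = 0`,
then comparing `x` with `e x e + c (1 - e)` for a large scalar `c` gives `e Δ(x) e = Δ(e x e)`.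
Every nonzero projection dominates a nonzero projection `e` whose compression `x ↦ e Δ(x) e` is
additive. Indeed, a corner without nonzero square-zero elements is commutative, and derivations
compress to zero there. Otherwise, splitting a corner twice yields three orthogonal copies of some
`e` shifted by one element `w`; a derivation vanishing at `w` acts on `diag(x, y, x + y)` slot by
slot, and a single derivation agrees with `Δ` at this matrix and at `w`. Hence the defect
`d = Δ(x + y) - Δ x - Δ y` satisfies `e d e = 0` for all these `e`, which by spectral theory forces
`d = 0`.

For self-adjoint `a`, additivity puts `Δ(a b) - Δ(a) b - a Δ(b)` into `(a - r) A` for every real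
`r`, and such an element vanishes because its mass below `t` in the spectral resolution of `a` is a
function of `t` with zero derivative. Finally, derivations of `C(Ω, A)` act fibrewise, since a
function vanishing at a point is a product of two functions vanishing there.
-/

open Subsemigroup (corner mem_corner_iff)

section Derivations

variable {A : Type*} [NormedRing A] [NormedAlgebra ℂ A] {D D₀ Δ : A → A} {e x y : A}

namespace IsCDerivation

protected lemma map_add (hD : IsCDerivation D) (x y : A) : D (x + y) = D x + D y := hD.1 x y

protected lemma map_smul (hD : IsCDerivation D) (c : ℂ) (x : A) : D (c • x) = c • D x := hD.2.1 c x

protected lemma map_mul (hD : IsCDerivation D) (x y : A) : D (x * y) = D x * y + x * D y :=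
  hD.2.2 x y

protected lemma map_zero (hD : IsCDerivation D) : D 0 = 0 := by
  simpa using hD.map_smul 0 0

protected lemma map_one (hD : IsCDerivation D) : D 1 = 0 := by
  simpa using hD.map_mul 1 1

protected lemma map_sub (hD : IsCDerivation D) (x y : A) : D (x - y) = D x - D y :=
  (AddMonoidHom.mk' D hD.map_add).map_sub x y

lemma map_sub_algebraMap (hD : IsCDerivation D) (x : A) (r : ℝ) :
    D (x - algebraMap ℝ A r) = D x := by
  rw [hD.map_sub, IsScalarTower.algebraMap_apply ℝ ℂ A, Algebra.algebraMap_eq_smul_one,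
    hD.map_smul, hD.map_one, smul_zero, sub_zero]

protected lemma sub (hD : IsCDerivation D) (hD₀ : IsCDerivation D₀) :
    IsCDerivation (D - D₀) := by
  refine ⟨fun x y => ?_, fun c x => ?_, fun x y => ?_⟩ <;> simp only [Pi.sub_apply]
  · rw [hD.map_add, hD₀.map_add, add_sub_add_comm]
  · rw [hD.map_smul, hD₀.map_smul, smul_sub]
  · rw [hD.map_mul, hD₀.map_mul]; noncomm_ring

lemma idem_mul_map_mul_idem (hD : IsCDerivation D) (he : IsIdempotentElem e) :
    e * D e * e = 0 := by
  have h : D e = D e * e + e * D e := by rw [← hD.map_mul, he.eq]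
  have h' : e * D e = e * D e * e + e * D e :=
    calc e * D e = e * (D e * e + e * D e) := by rw [← h]
      _ = e * D e * e + e * e * D e := by noncomm_ring
      _ = e * D e * e + e * D e := by rw [he.eq]
  simpa using h'

lemma map_idem_eq_zero_of_commute (hD : IsCDerivation D) (he : IsIdempotentElem e)
    (hc : Commute e (D e)) : D e = 0 := by
  have h : e * D e = 0 := by
    rw [← hD.idem_mul_map_mul_idem he, mul_assoc, ← hc.eq, ← mul_assoc, he.eq]
  have h' := hD.map_mul e e
  rwa [he.eq, ← hc.eq, h, add_zero] at h'

lemma commute_map_of_commute (hD : IsCDerivation D) (hxy : Commute x y)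
    (hxy' : Commute (D x) y) : Commute x (D y) := by
  have h : D x * y + x * D y = D y * x + y * D x := by rw [← hD.map_mul, ← hD.map_mul, hxy.eq]
  rw [hxy'.eq, add_comm (D y * x)] at h
  exact add_left_cancel h

lemma map_idem_mul_mul_idem (hD : IsCDerivation D) (he : D e = 0) (x : A) :
    D (e * x * e) = e * D x * e := by
  simp [hD.map_mul, he]

end IsCDerivation

namespace Is2LocalDerivation

lemma sub (hΔ : Is2LocalDerivation Δ) (hD₀ : IsCDerivation D₀) :
    Is2LocalDerivation (Δ - D₀) := by
  intro x y
  obtain ⟨D, hD, hx, hy⟩ := hΔ x y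
  exact ⟨D - D₀, hD.sub hD₀, by simp [hx], by simp [hy]⟩

protected lemma map_smul (hΔ : Is2LocalDerivation Δ) (c : ℂ) (x : A) : Δ (c • x) = c • Δ x := by
  obtain ⟨D, hD, hcx, hx⟩ := hΔ (c • x) x
  rw [hcx, hx, hD.map_smul]

end Is2LocalDerivation

end Derivations

section Compression

lemma idem_mul_mul_idem_mem_corner {S : Type*} [Semigroup S] (e x : S) : e * x * e ∈ corner e :=
  ⟨x, rfl⟩

lemma eq_idem_mul_mul_idem_of_mem_corner {S : Type*} [Semigroup S] {e a : S}
    (he : IsIdempotentElem e) (ha : a ∈ corner e) : e * a * e = a := by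
  obtain ⟨hea, hae⟩ := (mem_corner_iff he).1 ha
  rw [hea, hae]

variable {A : Type*} [NormedRing A] [NormedAlgebra ℂ A] {Δ : A → A} {e a y : A} {c : ℂ}

lemma commute_idem_add_smul_one_sub (he : IsIdempotentElem e) (ha : a ∈ corner e) :
    Commute (a + c • (1 - e)) e := by
  obtain ⟨hea, hae⟩ := (mem_corner_iff he).1 ha
  have : a * e = e * a := by rw [hea, hae]
  exact Commute.add_left this (((Commute.one_left e).sub_left (Commute.refl e)).smul_left c)

-- The element `w = a + c(1 - e)` acts as `a` on the range of `e` and as `c` on that of `1 - e`;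
-- since `‖a‖ < ‖c‖`, nothing but zero intertwines the two.
lemma commute_idem_of_commute_add_smul_one_sub (he : IsIdempotentElem e) (ha : a ∈ corner e)
    (hc : ‖a‖ < ‖c‖) (hy : Commute (a + c • (1 - e)) y) : Commute e y := by
  obtain ⟨hea, hae⟩ := (mem_corner_iff he).1 ha
  have eq_zero_of_norm_le : ∀ u : A, ‖c • u‖ ≤ ‖a‖ * ‖u‖ → u = 0 := by
    intro u hu
    by_contra hne
    rw [norm_smul] at hu
    exact (hu.trans_lt (mul_lt_mul_of_pos_right hc (norm_pos_iff.2 hne))).false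
  set w := a + c • (1 - e) with hw
  have hew : e * w = a := by simp [hw, mul_add, mul_sub, hea, he.eq]
  have hwe : w * e = a := by simp [hw, add_mul, sub_mul, hae, he.eq]
  have hfw : (1 - e) * w = c • (1 - e) := by
    rw [hw, mul_add, mul_smul_comm, he.one_sub.eq, sub_mul, hea, one_mul, sub_self, zero_add]
  have hwf : w * (1 - e) = c • (1 - e) := by
    rw [hw, add_mul, smul_mul_assoc, he.one_sub.eq, mul_sub, hae, mul_one, sub_self, zero_add]
  have upper : e * y * (1 - e) = 0 := by
    refine eq_zero_of_norm_le _ ?_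
    calc ‖c • (e * y * (1 - e))‖ = ‖e * (w * y) * (1 - e)‖ := by
          rw [← mul_smul_comm, ← hwf, hy.eq]; simp only [mul_assoc]
      _ = ‖a * (e * y * (1 - e))‖ := by
          rw [← mul_assoc e w, hew]; nth_rw 1 [← hae]; simp only [mul_assoc]
      _ ≤ ‖a‖ * ‖e * y * (1 - e)‖ := norm_mul_le _ _
  have lower : (1 - e) * y * e = 0 := by
    refine eq_zero_of_norm_le _ ?_
    calc ‖c • ((1 - e) * y * e)‖ = ‖(1 - e) * (y * w) * e‖ := by
          rw [← smul_mul_assoc, ← smul_mul_assoc, ← hfw, ← hy.eq]; simp only [mul_assoc]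
      _ = ‖(1 - e) * y * e * a‖ := by
          rw [mul_assoc _ (y * w), mul_assoc y, hwe]; nth_rw 1 [← hea]; simp only [mul_assoc]
      _ ≤ ‖a‖ * ‖(1 - e) * y * e‖ := (norm_mul_le _ _).trans_eq (mul_comm _ _)
  rw [mul_sub, mul_one, sub_eq_zero] at upper
  rw [sub_mul, one_mul, sub_mul, sub_eq_zero] at lower
  exact upper.trans lower.symm

namespace Is2LocalDerivation

lemma map_mem_corner (hΔ : Is2LocalDerivation Δ) (he : IsIdempotentElem e) (h0 : Δ e = 0)
    (ha : a ∈ corner e) : Δ a ∈ corner e := by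
  obtain ⟨D, hD, hDa, hDe⟩ := hΔ a e
  rw [hDa, ← eq_idem_mul_mul_idem_of_mem_corner he ha,
    hD.map_idem_mul_mul_idem (hDe.symm.trans h0)]
  exact idem_mul_mul_idem_mem_corner e _

lemma map_add_smul_one_sub (hΔ : Is2LocalDerivation Δ) (he : IsIdempotentElem e) (h0 : Δ e = 0)
    (ha : a ∈ corner e) (c : ℂ) : Δ (a + c • (1 - e)) = Δ a := by
  have map_w {D : A → A} (hD : IsCDerivation D) : D (a + c • (1 - e)) = D a - c • D e := by
    rw [hD.map_add, hD.map_smul, hD.map_sub, hD.map_one, zero_sub, smul_neg, sub_eq_add_neg]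
  have hw : Δ (a + c • (1 - e)) ∈ corner e := by
    obtain ⟨D, hD, hDw, hDe⟩ := hΔ (a + c • (1 - e)) e
    rw [hDw, map_w hD, ← hDe, h0, smul_zero, sub_zero,
      ← eq_idem_mul_mul_idem_of_mem_corner he ha, hD.map_idem_mul_mul_idem (hDe.symm.trans h0)]
    exact idem_mul_mul_idem_mem_corner e _
  obtain ⟨D, hD, hDw, hDa⟩ := hΔ (a + c • (1 - e)) a
  have hda := hΔ.map_mem_corner he h0 ha
  calc Δ (a + c • (1 - e)) = e * Δ (a + c • (1 - e)) * e :=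
        (eq_idem_mul_mul_idem_of_mem_corner he hw).symm
    _ = e * Δ a * e - c • (e * D e * e) := by
        rw [hDw, map_w hD, ← hDa, mul_sub, sub_mul, mul_smul_comm, smul_mul_assoc]
    _ = Δ a := by
        rw [hD.idem_mul_map_mul_idem he, smul_zero, sub_zero,
          eq_idem_mul_mul_idem_of_mem_corner he hda]

theorem idem_mul_map_mul_idem (hΔ : Is2LocalDerivation Δ) (he : IsIdempotentElem e)
    (h0 : Δ e = 0) (x : A) : e * Δ x * e = Δ (e * x * e) := by
  set a := e * x * e
  have ha : a ∈ corner e := idem_mul_mul_idem_mem_corner e x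
  obtain ⟨c, hc⟩ := NormedField.exists_lt_norm ℂ ‖a‖
  obtain ⟨D, hD, hDx, hDw⟩ := hΔ x (a + c • (1 - e))
  have hDw_eq : D (a + c • (1 - e)) = Δ a := by
    rw [← hDw, hΔ.map_add_smul_one_sub he h0 ha]
  have hDe : D e = 0 := by
    obtain ⟨h₁, h₂⟩ := (mem_corner_iff he).1 (hΔ.map_mem_corner he h0 ha)
    refine hD.map_idem_eq_zero_of_commute he (commute_idem_of_commute_add_smul_one_sub he ha hc
      (hD.commute_map_of_commute (commute_idem_add_smul_one_sub he ha) ?_))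
    rw [hDw_eq]
    exact h₂.trans h₁.symm
  rw [hDx, ← hD.map_idem_mul_mul_idem hDe, ← hDw_eq, hD.map_add, hD.map_smul, hD.map_sub,
    hD.map_one, hDe, sub_zero, smul_zero, add_zero]

end Is2LocalDerivation

end Compression

section CompressionAdditive

variable {A : Type*} [NormedRing A] [NormedAlgebra ℂ A] {D₀ Δ : A → A} {e : A}

/-- The compression `x ↦ e * Δ x * e` of `Δ` by `e` is additive on all of `A`. -/
def IsCompressionAdditive {A : Type*} [Ring A] (Δ : A → A) (e : A) : Prop :=
  ∀ x y : A, e * (Δ (x + y) - Δ x - Δ y) * e = 0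

lemma IsCDerivation.isCompressionAdditive_of_sub (hD₀ : IsCDerivation D₀)
    (h : IsCompressionAdditive (Δ - D₀) e) : IsCompressionAdditive Δ e := by
  intro x y
  have key : Δ (x + y) - Δ x - Δ y = (Δ - D₀) (x + y) - (Δ - D₀) x - (Δ - D₀) y := by
    simp only [Pi.sub_apply, hD₀.map_add]
    abel
  rw [key]
  exact h x y

lemma Is2LocalDerivation.isCompressionAdditive_of_corner (hΔ : Is2LocalDerivation Δ)
    (he : IsIdempotentElem e) (h0 : Δ e = 0)
    (h : ∀ x ∈ corner e, ∀ y ∈ corner e, e * Δ (x + y) * e = e * Δ x * e + e * Δ y * e) :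
    IsCompressionAdditive Δ e := by
  have compress (z : A) : e * Δ z * e = e * Δ (e * z * e) * e := by
    rw [← hΔ.idem_mul_map_mul_idem he h0]
    simp only [← mul_assoc, he.eq]
    simp only [mul_assoc, he.eq]
  intro x y
  have hxy := h _ (idem_mul_mul_idem_mem_corner e x) _ (idem_mul_mul_idem_mem_corner e y)
  rw [← add_mul, ← mul_add, ← compress, ← compress, ← compress] at hxy
  rw [mul_sub, sub_mul, mul_sub, sub_mul, hxy]
  abel

end CompressionAdditive

section Shift

/-- `w` shifts `n` orthogonal copies of the idempotent `p`: `s i` carries `p` to the `i`-th copy and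
`p * w ^ i` carries it back, so that the products `s i * p * w ^ j` form a system of matrix units,
and `p` itself is the copy with index `0`. -/
structure IsShift {A : Type*} [Ring A] {n : ℕ} (p w : A) (s : Fin n → A) : Prop where
  isIdempotentElem : IsIdempotentElem p
  pow_mul (i : Fin n) : w ^ (i : ℕ) * s i = p
  idem_mul_pow_mul_of_ne {i j : Fin n} (hij : i ≠ j) : p * w ^ (i : ℕ) * s j = 0

/-- The diagonal matrix with entries `a i` in the corner of `p`, see `IsShift`. -/
def shiftDiagonal {A : Type*} [Ring A] {n : ℕ} (w : A) (s a : Fin n → A) : A :=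
  ∑ i, s i * a i * w ^ (i : ℕ)

namespace IsShift

section Ring

variable {A : Type*} [Ring A] {n : ℕ} {p w : A} {s a : Fin n → A}

lemma idem_mul_pow_mul_shiftDiagonal (hs : IsShift p w s) (ha : ∀ i, a i ∈ corner p)
    (i : Fin n) : p * w ^ (i : ℕ) * shiftDiagonal w s a = a i * w ^ (i : ℕ) := by
  have hpa := ((mem_corner_iff hs.isIdempotentElem).1 (ha i)).1
  rw [shiftDiagonal, Finset.mul_sum, Finset.sum_eq_single_of_mem i (Finset.mem_univ i)]
  · rw [mul_assoc p, ← mul_assoc (w ^ (i : ℕ)), ← mul_assoc (w ^ (i : ℕ)), hs.pow_mul,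
      ← mul_assoc p, ← mul_assoc p, hs.isIdempotentElem.eq, hpa]
  · intro j _ hji
    rw [← mul_assoc, ← mul_assoc, hs.idem_mul_pow_mul_of_ne hji.symm, zero_mul, zero_mul]

lemma shiftDiagonal_mul (hs : IsShift p w s) (ha : ∀ i, a i ∈ corner p) (i : Fin n) :
    shiftDiagonal w s a * s i = s i * a i := by
  have hap (j : Fin n) := ((mem_corner_iff hs.isIdempotentElem).1 (ha j)).2
  rw [shiftDiagonal, Finset.sum_mul, Finset.sum_eq_single_of_mem i (Finset.mem_univ i)]
  · rw [mul_assoc, hs.pow_mul, mul_assoc, hap]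
  · intro j _ hji
    rw [← hap j, mul_assoc, mul_assoc, mul_assoc, ← mul_assoc p, hs.idem_mul_pow_mul_of_ne hji,
      mul_zero, mul_zero]

end Ring

variable {A : Type*} [NormedRing A] [NormedAlgebra ℂ A] {p w : A} {D Δ : A → A}

lemma idem_mul_map_shiftDiagonal_mul {n : ℕ} {s a : Fin n → A} (hs : IsShift p w s)
    (hD : IsCDerivation D) (hw : D w = 0) (ha : ∀ i, a i ∈ corner p) (i : Fin n) :
    p * w ^ (i : ℕ) * D (shiftDiagonal w s a) * s i = p * D (a i) * p := by
  have hp := hs.isIdempotentElem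
  have map_pow (k : ℕ) : D (w ^ k) = 0 := by
    induction k with
    | zero => rw [pow_zero, hD.map_one]
    | succ k ih => rw [pow_succ, hD.map_mul, ih, hw, zero_mul, mul_zero, add_zero]
  have leibniz : D p * w ^ (i : ℕ) * shiftDiagonal w s a +
      p * w ^ (i : ℕ) * D (shiftDiagonal w s a) = D (a i) * w ^ (i : ℕ) := by
    have h := congr_arg D (hs.idem_mul_pow_mul_shiftDiagonal ha i)
    simpa only [hD.map_mul, map_pow, mul_zero, add_zero] using h
  have first_term : p * (D p * w ^ (i : ℕ) * shiftDiagonal w s a) * s i = 0 := by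
    rw [mul_assoc, mul_assoc, hs.shiftDiagonal_mul ha, mul_assoc (D p), ← mul_assoc (w ^ (i : ℕ)),
      hs.pow_mul, ← mul_assoc (D p), ← mul_assoc p, ← mul_assoc p,
      hD.idem_mul_map_mul_idem hp, zero_mul]
  calc p * w ^ (i : ℕ) * D (shiftDiagonal w s a) * s i
      = p * (D p * w ^ (i : ℕ) * shiftDiagonal w s a +
          p * w ^ (i : ℕ) * D (shiftDiagonal w s a)) * s i := by
        rw [mul_add, add_mul, first_term, zero_add]
        simp only [← mul_assoc, hp.eq]
    _ = p * D (a i) * p := by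
        rw [leibniz, mul_assoc, mul_assoc (D (a i)), hs.pow_mul, mul_assoc]

lemma idem_mul_map_shiftDiagonal_congr {n : ℕ} {s a b : Fin n → A} (hs : IsShift p w s)
    (hΔ : Is2LocalDerivation Δ) (ha : ∀ i, a i ∈ corner p) (hb : ∀ i, b i ∈ corner p)
    {i : Fin n} (hab : a i = b i) :
    p * w ^ (i : ℕ) * Δ (shiftDiagonal w s a) * s i =
      p * w ^ (i : ℕ) * Δ (shiftDiagonal w s b) * s i := by
  obtain ⟨D, hD, hDa, hDb⟩ := hΔ (shiftDiagonal w s a) (shiftDiagonal w s b)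
  set d := shiftDiagonal w s a - shiftDiagonal w s b with hd
  have left : p * w ^ (i : ℕ) * d = 0 := by
    rw [hd, mul_sub, hs.idem_mul_pow_mul_shiftDiagonal ha, hs.idem_mul_pow_mul_shiftDiagonal hb,
      hab, sub_self]
  have right : d * s i = 0 := by
    rw [hd, sub_mul, hs.shiftDiagonal_mul ha, hs.shiftDiagonal_mul hb, hab, sub_self]
  have h : D (p * w ^ (i : ℕ)) * (d * s i) + p * w ^ (i : ℕ) * D d * s i = 0 := by
    rw [← mul_assoc, ← add_mul, ← hD.map_mul, left, hD.map_zero, zero_mul]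
  rwa [right, mul_zero, zero_add, hd, hD.map_sub, mul_sub, sub_mul, sub_eq_zero, ← hDa,
    ← hDb] at h

lemma idem_mul_map_shiftDiagonal_mul_of_map_eq_zero {n : ℕ} {s a : Fin (n + 1) → A}
    (hs : IsShift p w s) (hΔ : Is2LocalDerivation Δ) (hw : Δ w = 0) (ha : ∀ i, a i ∈ corner p)
    (i : Fin (n + 1)) :
    p * w ^ (i : ℕ) * Δ (shiftDiagonal w s a) * s i = p * Δ (a i) * p := by
  have hp := hs.isIdempotentElem
  have hpx := ((mem_corner_iff hp).1 (ha i)).1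
  have hs0 : s 0 = p := by simpa using hs.pow_mul 0
  have single_mem (j : Fin (n + 1)) : Pi.single (M := fun _ => A) 0 (a i) j ∈ corner p := by
    refine Fin.cases ?_ (fun j => ?_) j
    · simpa using ha i
    · exact ⟨0, by simp⟩
  have single_eq : shiftDiagonal w s (Pi.single 0 (a i)) = a i := by
    rw [shiftDiagonal, Fin.sum_univ_succ]
    simp [hs0, hpx]
  -- Slot `i` of the constant diagonal matrix is compared with its slot `0`.
  obtain ⟨D, hD, hDc, hDw⟩ := hΔ (shiftDiagonal w s fun _ => a i) w
  have hDw := hDw.symm.trans hw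
  have slot (j : Fin (n + 1)) := hs.idem_mul_map_shiftDiagonal_mul hD hDw (fun _ => ha i) j
  calc p * w ^ (i : ℕ) * Δ (shiftDiagonal w s a) * s i
      = p * w ^ (i : ℕ) * Δ (shiftDiagonal w s fun _ => a i) * s i :=
        hs.idem_mul_map_shiftDiagonal_congr hΔ ha (fun _ => ha i) rfl
    _ = p * w ^ ((0 : Fin (n + 1)) : ℕ) * Δ (shiftDiagonal w s fun _ => a i) * s 0 := by
        rw [hDc, slot, slot]
    _ = p * w ^ ((0 : Fin (n + 1)) : ℕ) * Δ (shiftDiagonal w s (Pi.single 0 (a i))) * s 0 :=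
        hs.idem_mul_map_shiftDiagonal_congr hΔ (fun _ => ha i) single_mem (by simp)
    _ = p * Δ (a i) * p := by rw [single_eq, hs0, Fin.val_zero, pow_zero, mul_one]

theorem exists_isCDerivation_idem_mul_map_mul_idem_eq {n : ℕ} {s a : Fin (n + 1) → A}
    (hs : IsShift p w s) (hΔ : Is2LocalDerivation Δ) (hw : Δ w = 0) (ha : ∀ i, a i ∈ corner p) :
    ∃ D, IsCDerivation D ∧ ∀ i, p * Δ (a i) * p = p * D (a i) * p := by
  obtain ⟨D, hD, hDa, hDw⟩ := hΔ (shiftDiagonal w s a) w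
  refine ⟨D, hD, fun i => ?_⟩
  rw [← hs.idem_mul_map_shiftDiagonal_mul_of_map_eq_zero hΔ hw ha i, hDa,
    hs.idem_mul_map_shiftDiagonal_mul hD (hDw.symm.trans hw) ha i]

theorem isCompressionAdditive {s : Fin 3 → A} (hs : IsShift p w s) (hΔ : Is2LocalDerivation Δ) :
    IsCompressionAdditive Δ p := by
  obtain ⟨D₀, hD₀, hp₀, hw₀⟩ := hΔ p w
  have hΔ₀ := hΔ.sub hD₀
  refine hD₀.isCompressionAdditive_of_sub
    (hΔ₀.isCompressionAdditive_of_corner hs.isIdempotentElem (sub_eq_zero.2 hp₀) ?_)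
  rintro _ ⟨x, rfl⟩ _ ⟨y, rfl⟩
  set a : Fin 3 → A := ![p * x * p, p * y * p, p * x * p + p * y * p] with ha_def
  have ha : ∀ i, a i ∈ corner p := by
    simp only [Fin.forall_fin_succ, ha_def]
    refine ⟨⟨x, rfl⟩, ⟨y, rfl⟩, ⟨x + y, ?_⟩, fun i => i.elim0⟩
    simp [mul_add, add_mul]
  obtain ⟨D, hD, hDa⟩ :=
    hs.exists_isCDerivation_idem_mul_map_mul_idem_eq hΔ₀ (sub_eq_zero.2 hw₀) ha
  have h₀ := hDa 0
  have h₁ := hDa 1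
  have h₂ := hDa 2
  simp only [ha_def, Matrix.cons_val] at h₀ h₁ h₂
  rw [h₀, h₁, h₂, hD.map_add, mul_add, add_mul]

end IsShift

end Shift

section Locality

open Filter Topology

variable {A : Type*} [CStarAlgebra A] {h T x : A}

/-- The squared norm of the part of `T` living on the spectral subspace `(-∞, t]` of `h`, with
continuous functions in place of the indicator function of `(-∞, t]`. -/
noncomputable def lowerCutoffNormSq (h T : A) (t : ℝ) : ℝ :=
  sInf ((fun g : ℝ → ℝ => ‖cfc g h * T‖ ^ 2) '' {g | Continuous g ∧ ∀ s ≤ t, 1 ≤ g s})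

lemma bddBelow_norm_sq_image (h T : A) (S : Set (ℝ → ℝ)) :
    BddBelow ((fun g : ℝ → ℝ => ‖cfc g h * T‖ ^ 2) '' S) :=
  ⟨0, by rintro _ ⟨g, -, rfl⟩; positivity⟩

lemma lowerCutoffNormSq_le {g : ℝ → ℝ} {t : ℝ} (hg : Continuous g) (hgt : ∀ s ≤ t, 1 ≤ g s) :
    lowerCutoffNormSq h T t ≤ ‖cfc g h * T‖ ^ 2 :=
  csInf_le (bddBelow_norm_sq_image h T _) ⟨g, ⟨hg, hgt⟩, rfl⟩

lemma le_lowerCutoffNormSq {t B : ℝ}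
    (hB : ∀ g : ℝ → ℝ, Continuous g → (∀ s ≤ t, 1 ≤ g s) → B ≤ ‖cfc g h * T‖ ^ 2) :
    B ≤ lowerCutoffNormSq h T t := by
  refine le_csInf ⟨_, 1, ⟨continuous_const, fun _ _ => le_rfl⟩, rfl⟩ ?_
  rintro _ ⟨g, ⟨hg, hgt⟩, rfl⟩
  exact hB g hg hgt

lemma monotone_lowerCutoffNormSq (h T : A) : Monotone (lowerCutoffNormSq h T) := fun _ _ htu =>
  le_lowerCutoffNormSq fun _ hg hgu => lowerCutoffNormSq_le hg fun s hs => hgu s (hs.trans htu)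

lemma norm_cfc_mul_sq (h T : A) (g : ℝ → ℝ) (hg : Continuous g) :
    ‖cfc g h * T‖ ^ 2 = ‖star T * cfc (fun s => g s * g s) h * T‖ := by
  rw [cfc_mul g g h, sq, ← CStarRing.norm_star_mul_self, star_mul,
    (cfc_predicate g h : IsSelfAdjoint _).star_eq]
  simp only [mul_assoc]

lemma norm_cfc_sqrt_mul_sq_le {f g : ℝ → ℝ} (hf : Continuous f) (hg : Continuous g) :
    ‖cfc (fun s => √(f s * f s + g s * g s)) h * T‖ ^ 2 ≤
      ‖cfc f h * T‖ ^ 2 + ‖cfc g h * T‖ ^ 2 := by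
  rw [norm_cfc_mul_sq h T _ (by fun_prop), norm_cfc_mul_sq h T _ hf, norm_cfc_mul_sq h T _ hg]
  have key (s : ℝ) : √(f s * f s + g s * g s) * √(f s * f s + g s * g s) =
      f s * f s + g s * g s :=
    Real.mul_self_sqrt (add_nonneg (mul_self_nonneg _) (mul_self_nonneg _))
  simp only [key]
  rw [cfc_add (a := h) (fun s => f s * f s) (fun s => g s * g s) (by fun_prop) (by fun_prop),
    mul_add, add_mul]
  exact norm_add_le _ _

lemma lowerCutoffNormSq_le_add {b : ℝ → ℝ} {t u : ℝ} (hb : Continuous b)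
    (hbtu : ∀ s ∈ Set.Icc t u, 1 ≤ b s) :
    lowerCutoffNormSq h T u ≤ lowerCutoffNormSq h T t + ‖cfc b h * T‖ ^ 2 := by
  rw [← sub_le_iff_le_add]
  refine le_lowerCutoffNormSq fun g hg hgt => ?_
  rw [sub_le_iff_le_add]
  refine (lowerCutoffNormSq_le (by fun_prop) fun s hs => ?_).trans (norm_cfc_sqrt_mul_sq_le hg hb)
  rw [Real.one_le_sqrt]
  rcases le_total s t with hst | hts
  · nlinarith [hgt s hst, mul_self_nonneg (b s)]
  · nlinarith [hbtu s ⟨hts, hs⟩, mul_self_nonneg (g s)]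

lemma abs_lowerCutoffNormSq_sub_le {b : ℝ → ℝ} {t u : ℝ} (hb : Continuous b)
    (hbtu : ∀ s ∈ Set.uIcc t u, 1 ≤ b s) :
    |lowerCutoffNormSq h T u - lowerCutoffNormSq h T t| ≤ ‖cfc b h * T‖ ^ 2 := by
  wlog htu : t ≤ u generalizing t u
  · rw [abs_sub_comm]
    exact this (by rwa [Set.uIcc_comm]) (le_of_not_ge htu)
  rw [abs_of_nonneg (sub_nonneg.2 (monotone_lowerCutoffNormSq h T htu)), sub_le_iff_le_add']
  exact lowerCutoffNormSq_le_add hb (Set.uIcc_of_le htu ▸ hbtu)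

lemma lowerCutoffNormSq_nonpos {t : ℝ} (ht : ∀ s ∈ spectrum ℝ h, t + 1 ≤ s) :
    lowerCutoffNormSq h T t ≤ 0 := by
  have hg : Continuous fun s : ℝ => max 0 (t + 1 - s) := by fun_prop
  have zero : cfc (fun s : ℝ => max 0 (t + 1 - s)) h = 0 := by
    rw [cfc_congr (g := fun _ => 0) fun s hs => max_eq_left (sub_nonpos.2 (ht s hs)),
      cfc_const_zero]
  refine (lowerCutoffNormSq_le hg fun s hs => ?_).trans_eq (by rw [zero]; simp)
  exact le_max_of_le_right (by linarith)

lemma norm_sq_le_lowerCutoffNormSq (hh : IsSelfAdjoint h) {t : ℝ}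
    (ht : ∀ s ∈ spectrum ℝ h, s ≤ t) : ‖T‖ ^ 2 ≤ lowerCutoffNormSq h T t := by
  refine le_lowerCutoffNormSq fun g hg hgt => ?_
  have hpos (s : ℝ) : 0 < max (g s) 1 := lt_max_of_lt_right one_pos
  have hinv : Continuous fun s => (max (g s) 1)⁻¹ := by
    exact (hg.max continuous_const).inv₀ fun s => (hpos s).ne'
  have inv_mul : cfc (fun s => (max (g s) 1)⁻¹) h * cfc g h = 1 := by
    rw [← cfc_mul _ _ h hinv.continuousOn hg.continuousOn, ← cfc_const_one ℝ h]
    refine cfc_congr fun s hs => ?_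
    rw [max_eq_left (hgt s (ht s hs)), inv_mul_cancel₀ (by linarith [hgt s (ht s hs)])]
  have norm_inv_le : ‖cfc (fun s => (max (g s) 1)⁻¹) h‖ ≤ 1 :=
    norm_cfc_le zero_le_one fun s _ => by
      rw [Real.norm_of_nonneg (inv_pos.2 (hpos s)).le]
      exact inv_le_one_of_one_le₀ (le_max_right _ _)
  refine pow_le_pow_left₀ (norm_nonneg T) ?_ 2
  calc ‖T‖ = ‖cfc (fun s => (max (g s) 1)⁻¹) h * (cfc g h * T)‖ := by
        rw [← mul_assoc, inv_mul, one_mul]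
    _ ≤ 1 * ‖cfc g h * T‖ := (norm_mul_le _ _).trans (by gcongr)
    _ = ‖cfc g h * T‖ := one_mul _

-- The hypothesis makes `lowerCutoffNormSq h T` differentiable with derivative zero everywhere.
theorem eq_zero_of_norm_cfc_mul_le (hh : IsSelfAdjoint h)
    (hT : ∀ r : ℝ, ∃ C : ℝ, ∀ δ > 0, ∀ g : ℝ → ℝ, Continuous g → (∀ s, |g s| ≤ 1) →
      (∀ s, δ ≤ |s - r| → g s = 0) → ‖cfc g h * T‖ ≤ C * δ) : T = 0 := by
  set F := lowerCutoffNormSq h T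
  have hF (r : ℝ) : HasDerivAt F 0 r := by
    obtain ⟨C, hC⟩ := hT r
    have quadratic : (fun t => F t - F r) =O[𝓝 r] fun t => ‖t - r‖ ^ 2 := by
      refine Asymptotics.IsBigO.of_bound ((2 * C) ^ 2) (Eventually.of_forall fun t => ?_)
      rcases eq_or_ne t r with rfl | htr
      · simp
      have hδ : 0 < |t - r| := abs_pos.2 (sub_ne_zero.2 htr)
      let b : ContDiffBump r := ⟨|t - r|, 2 * |t - r|, hδ, by linarith⟩
      have hb : Set.uIcc r t ⊆ {s | 1 ≤ b s} := fun s hs =>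
        (b.one_of_mem_closedBall (Set.abs_sub_left_of_mem_uIcc hs)).ge
      have hbT : ‖cfc b h * T‖ ≤ C * (2 * |t - r|) :=
        hC _ b.rOut_pos b b.continuous (fun s => (abs_of_nonneg b.nonneg).trans_le b.le_one)
          fun s hs => b.zero_of_le_dist hs
      calc ‖F t - F r‖ ≤ ‖cfc b h * T‖ ^ 2 :=
            abs_lowerCutoffNormSq_sub_le b.continuous hb
        _ ≤ (C * (2 * |t - r|)) ^ 2 := pow_le_pow_left₀ (norm_nonneg _) hbT 2
        _ = (2 * C) ^ 2 * ‖‖t - r‖ ^ 2‖ := by rw [norm_pow, norm_norm, Real.norm_eq_abs]; ring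
    simpa using (quadratic.hasFDerivAt one_lt_two).hasDerivAt.add_const (F r)
  have hconst (t u : ℝ) : F t = F u :=
    is_const_of_deriv_eq_zero (fun r => (hF r).differentiableAt) (fun r => (hF r).deriv) t u
  obtain ⟨R, hR⟩ := (spectrum.isCompact (𝕜 := ℝ) h).isBounded.subset_closedBall 0
  have abs_le (s : ℝ) (hs : s ∈ spectrum ℝ h) : |s| ≤ R := by simpa using hR hs
  have hsq : ‖T‖ ^ 2 ≤ 0 :=
    calc ‖T‖ ^ 2 ≤ F R :=
          norm_sq_le_lowerCutoffNormSq hh fun s hs => (le_abs_self s).trans (abs_le s hs)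
      _ = F (-R - 1) := hconst _ _
      _ ≤ 0 := lowerCutoffNormSq_nonpos fun s hs => by linarith [neg_le_of_abs_le (abs_le s hs)]
  exact norm_eq_zero.1 (pow_eq_zero_iff two_ne_zero |>.1 (hsq.antisymm (by positivity)))

section Cfc

variable {g : ℝ → ℝ} {r δ : ℝ}

lemma cfc_mul_sub_algebraMap (hh : IsSelfAdjoint h) (hg : Continuous g) (r : ℝ) :
    cfc g h * (h - algebraMap ℝ A r) = cfc (fun s => g s * (s - r)) h := by
  rw [cfc_mul g (fun s => s - r) h, cfc_sub (fun s : ℝ => s) (fun _ => r) h, cfc_id' ℝ h,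
    cfc_const r h]

lemma norm_cfc_mul_sub_algebraMap_le (hh : IsSelfAdjoint h) (hδ : 0 ≤ δ) (hg : Continuous g)
    (hg1 : ∀ s, |g s| ≤ 1) (hgδ : ∀ s, δ ≤ |s - r| → g s = 0) :
    ‖cfc g h * (h - algebraMap ℝ A r)‖ ≤ δ := by
  rw [cfc_mul_sub_algebraMap hh hg]
  refine norm_cfc_le hδ fun s _ => ?_
  rw [norm_mul, Real.norm_eq_abs, Real.norm_eq_abs]
  rcases le_total δ |s - r| with hs | hs
  · rwa [hgδ s hs, abs_zero, zero_mul]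
  · exact (mul_le_of_le_one_left (abs_nonneg _) (hg1 s)).trans hs

end Cfc

theorem eq_zero_of_forall_exists_eq_sub_algebraMap_mul (hh : IsSelfAdjoint h)
    (hT : ∀ r : ℝ, ∃ y, T = (h - algebraMap ℝ A r) * y) : T = 0 := by
  refine eq_zero_of_norm_cfc_mul_le hh fun r => ?_
  obtain ⟨y, rfl⟩ := hT r
  refine ⟨‖y‖, fun δ hδ g hg hg1 hgδ => ?_⟩
  rw [← mul_assoc, mul_comm ‖y‖]
  exact (norm_mul_le _ _).trans (mul_le_mul_of_nonneg_right
    (norm_cfc_mul_sub_algebraMap_le hh hδ.le hg hg1 hgδ) (norm_nonneg y))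

theorem commute_of_cfc_mul_mul_cfc_eq_zero (hh : IsSelfAdjoint h)
    (hx : ∀ f g : ℝ → ℝ, Continuous f → Continuous g → (∀ s, f s * g s = 0) →
      cfc f h * x * cfc g h = 0) : Commute h x := by
  refine sub_eq_zero.1 (eq_zero_of_norm_cfc_mul_le hh fun r => ⟨3 * ‖x‖, ?_⟩)
  intro δ hδ g hg hg1 hgδ
  let χ : ContDiffBump r := ⟨δ, 2 * δ, hδ, by linarith⟩
  set k := h - algebraMap ℝ A r with hk
  have hgχ : cfc g h * x = cfc g h * x * cfc χ h := by
    have : cfc g h * x * cfc (fun s => 1 - χ s) h = 0 := by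
      refine hx _ _ hg (continuous_const.sub χ.continuous) fun s => ?_
      rcases le_total δ |s - r| with hs | hs
      · rw [hgδ s hs, zero_mul]
      · rw [χ.one_of_mem_closedBall hs, sub_self, mul_zero]
    rwa [cfc_sub (fun _ => 1) χ h continuousOn_const χ.continuous.continuousOn,
      cfc_const_one ℝ h, mul_sub, mul_one, sub_eq_zero] at this
  have hgT : cfc g h * (h * x - x * h) = cfc g h * k * x - cfc g h * x * k := by
    have : h * x - x * h = k * x - x * k := by
      rw [hk, sub_mul, mul_sub, Algebra.commutes r x, sub_sub_sub_cancel_right]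
    rw [this, mul_sub, mul_assoc, mul_assoc]
  have bound_g : ‖cfc g h‖ ≤ 1 := norm_cfc_le zero_le_one fun s _ => hg1 s
  have bound_gk : ‖cfc g h * k‖ ≤ δ := norm_cfc_mul_sub_algebraMap_le hh hδ.le hg hg1 hgδ
  have bound_χk : ‖cfc χ h * k‖ ≤ 2 * δ :=
    norm_cfc_mul_sub_algebraMap_le hh χ.rOut_pos.le χ.continuous
      (fun s => (abs_of_nonneg χ.nonneg).trans_le χ.le_one) fun s hs => χ.zero_of_le_dist hs
  calc ‖cfc g h * (h * x - x * h)‖ = ‖cfc g h * k * x - cfc g h * x * (cfc χ h * k)‖ := by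
        rw [hgT, ← mul_assoc, ← hgχ]
    _ ≤ δ * ‖x‖ + 1 * ‖x‖ * (2 * δ) := by
        refine (norm_sub_le _ _).trans (add_le_add ?_ ?_)
        · exact norm_mul_le_of_le bound_gk le_rfl
        · exact norm_mul_le_of_le (norm_mul_le_of_le bound_g le_rfl) bound_χk
    _ = 3 * ‖x‖ * δ := by ring

end Locality

section AdditiveTwoLocal

variable {A : Type*} [CStarAlgebra A] {Δ : A → A}

lemma Is2LocalDerivation.map_mul_of_isSelfAdjoint (hΔ : Is2LocalDerivation Δ)
    (hadd : ∀ x y, Δ (x + y) = Δ x + Δ y) {a : A} (ha : IsSelfAdjoint a) (b : A) :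
    Δ (a * b) = Δ a * b + a * Δ b := by
  refine sub_eq_zero.1 (eq_zero_of_forall_exists_eq_sub_algebraMap_mul ha fun r => ?_)
  set k := a - algebraMap ℝ A r with hk
  obtain ⟨D, hD, hDa, hDkb⟩ := hΔ a (k * b)
  have hDk : D k = Δ a := (hD.map_sub_algebraMap a r).trans hDa.symm
  have hab : a * b = k * b + ((algebraMap ℝ ℂ r) • b) := by
    rw [hk, sub_mul, Algebra.smul_def, ← IsScalarTower.algebraMap_apply ℝ ℂ A, sub_add_cancel]
  refine ⟨D b - Δ b, ?_⟩
  rw [hab, hadd, hΔ.map_smul, hDkb, hD.map_mul, hDk, Algebra.smul_def,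
    ← IsScalarTower.algebraMap_apply ℝ ℂ A, mul_sub, hk, sub_mul _ _ (Δ b)]
  abel

theorem Is2LocalDerivation.isCDerivation_of_map_add (hΔ : Is2LocalDerivation Δ)
    (hadd : ∀ x y, Δ (x + y) = Δ x + Δ y) : IsCDerivation Δ := by
  refine ⟨hadd, hΔ.map_smul, fun a b => ?_⟩
  rw [← realPart_add_I_smul_imaginaryPart a, add_mul, hadd, hadd, smul_mul_assoc, hΔ.map_smul,
    hΔ.map_smul, hΔ.map_mul_of_isSelfAdjoint hadd (realPart a).2,
    hΔ.map_mul_of_isSelfAdjoint hadd (imaginaryPart a).2, add_mul, add_mul, smul_add,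
    smul_mul_assoc, smul_mul_assoc]
  abel

end AdditiveTwoLocal

section AbelianProjection

section StarModule

variable {A : Type*} [Ring A] [StarRing A] [Algebra ℂ A] [StarModule ℂ A] {e x : A}

lemma commute_realPart (he : IsSelfAdjoint e) (hx : Commute x e) :
    Commute (realPart x : A) e := by
  rw [realPart_apply_coe]
  exact (hx.add_left (he.star_eq ▸ hx.star_star)).smul_left _

lemma commute_imaginaryPart (he : IsSelfAdjoint e) (hx : Commute x e) :
    Commute (imaginaryPart x : A) e := by
  rw [imaginaryPart_apply_coe]
  exact ((hx.sub_left (he.star_eq ▸ hx.star_star)).smul_left _).smul_left _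

end StarModule

lemma eq_zero_of_mul_self_eq_zero_of_isStarNormal {A : Type*} [NonUnitalNormedRing A] [StarRing A]
    [CStarRing A] {x : A} [IsStarNormal x] (hx : x * x = 0) : x = 0 := by
  rw [← CStarRing.star_mul_self_eq_zero_iff, ← CStarRing.star_mul_self_eq_zero_iff, star_mul,
    star_star, mul_assoc (star x), ← mul_assoc x, ← star_comm_self' x, mul_assoc (star x), hx]
  simp

variable {A : Type*} [CStarAlgebra A] {D Δ : A → A} {e h x : A}

lemma exists_continuous_pow_three_eq : ∃ w : ℝ → ℝ, Continuous w ∧ ∀ s, w s * w s * w s = s := by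
  refine ⟨fun s => max s 0 ^ (3⁻¹ : ℝ) - max (-s) 0 ^ (3⁻¹ : ℝ), ?_, fun s => ?_⟩
  · exact ((continuous_id.max continuous_const).rpow_const fun _ => .inr (by norm_num)).sub
      ((continuous_neg.max continuous_const).rpow_const fun _ => .inr (by norm_num))
  · have cube {t : ℝ} (ht : 0 ≤ t) : t ^ (3⁻¹ : ℝ) * t ^ (3⁻¹ : ℝ) * t ^ (3⁻¹ : ℝ) = t := by
      simpa [pow_succ] using Real.rpow_inv_natCast_pow ht three_ne_zero
    have zero : (0 : ℝ) ^ (3⁻¹ : ℝ) = 0 := Real.zero_rpow (by norm_num)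
    rcases le_total 0 s with hs | hs
    · simp only [max_eq_left hs, max_eq_right (neg_nonpos.2 hs), zero, sub_zero, cube hs]
    · simp only [max_eq_right hs, max_eq_left (neg_nonneg.2 hs), zero, zero_sub]
      linarith [cube (neg_nonneg.2 hs)]

/-- A projection whose corner `e A e` is commutative. -/
structure IsAbelianProjection {A : Type*} [Semigroup A] [Star A] (e : A) : Prop
    extends IsStarProjection e where
  commute_of_mem_corner : ∀ x ∈ corner e, ∀ y ∈ corner e, Commute x y

namespace IsAbelianProjection

-- Passing to a cube root `w` of `h - r` yields `T = e * D h * e = 3 w ^ 2 * (e * D w * e)` in the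
-- commutative corner, so that `T ^ 2` is divisible by `h - r` for every real `r`.
lemma idem_mul_map_mul_idem_of_isSelfAdjoint (he : IsAbelianProjection e) (hD : IsCDerivation D)
    (hh : IsSelfAdjoint h) (hhe : Commute h e) : e * D h * e = 0 := by
  set T := e * D h * e with hT
  have hT_mem : T ∈ corner e := ⟨D h, rfl⟩
  have : IsStarNormal T :=
    ⟨he.commute_of_mem_corner _ ⟨star (D h), by simp [hT, he.isSelfAdjoint.star_eq, mul_assoc]⟩
      _ hT_mem⟩
  refine eq_zero_of_mul_self_eq_zero_of_isStarNormal
    (eq_zero_of_forall_exists_eq_sub_algebraMap_mul hh fun r => ?_)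
  obtain ⟨f, hf, hf3⟩ := exists_continuous_pow_three_eq
  set k := h - algebraMap ℝ A r with hk
  set w := cfc f k with hw
  have hk_sa : IsSelfAdjoint k := hh.sub (.algebraMap A (.all r))
  have hw3 : w * w * w = k := by
    rw [hw, ← cfc_mul f f k, ← cfc_mul _ f k]
    simp only [hf3]
    exact cfc_id' ℝ k
  have hwe : Commute w e := (hhe.sub_left (Algebra.commutes r e)).cfc_real f
  set X := e * D w * e with hX
  set W := e * w * e with hW
  have hXW : Commute X W := he.commute_of_mem_corner _ ⟨D w, rfl⟩ _ ⟨w, rfl⟩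
  have he_mul (z : A) : e * (e * z) = e * z := by rw [← mul_assoc, he.isIdempotentElem.eq]
  have hw_mul (z : A) : w * (e * z) = e * (w * z) := hwe.left_comm z
  have hT_eq : T = 3 * (W * W * X) := by
    have leibniz : T = X * W * W + W * X * W + W * W * X := by
      rw [hT, ← hD.map_sub_algebraMap h r, ← hk, ← hw3, hD.map_mul, hD.map_mul]
      simp only [hX, hW, mul_add, add_mul, mul_assoc, hwe.eq, hw_mul, he_mul]
    rw [leibniz, hXW.eq, mul_assoc, hXW.eq]
    noncomm_ring
  have hW3 : W * W * W = k * e := by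
    rw [← hw3]
    simp only [hW, mul_assoc, hwe.eq, hw_mul, he_mul]
  refine ⟨e * (9 * (W * X * X)), ?_⟩
  calc T * T = 9 * (W * W * (X * (W * W)) * X) := by rw [hT_eq]; noncomm_ring
    _ = W * W * W * (9 * (W * X * X)) := by rw [(hXW.mul_right hXW).eq]; noncomm_ring
    _ = k * (e * (9 * (W * X * X))) := by rw [hW3, mul_assoc]

lemma idem_mul_map_mul_idem (he : IsAbelianProjection e) (hD : IsCDerivation D)
    (hx : Commute x e) : e * D x * e = 0 := by
  rw [← realPart_add_I_smul_imaginaryPart x, hD.map_add, hD.map_smul, mul_add, add_mul,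
    mul_smul_comm, smul_mul_assoc,
    he.idem_mul_map_mul_idem_of_isSelfAdjoint hD (realPart x).2
      (commute_realPart he.isSelfAdjoint hx),
    he.idem_mul_map_mul_idem_of_isSelfAdjoint hD (imaginaryPart x).2
      (commute_imaginaryPart he.isSelfAdjoint hx), smul_zero, add_zero]

theorem isCompressionAdditive (he : IsAbelianProjection e) (hΔ : Is2LocalDerivation Δ) :
    IsCompressionAdditive Δ e := by
  obtain ⟨D₀, hD₀, he₀, -⟩ := hΔ e e
  refine hD₀.isCompressionAdditive_of_sub ?_
  have hΔ₀ := hΔ.sub hD₀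
  have compression_eq_zero (x : A) : e * (Δ - D₀) x * e = 0 := by
    obtain ⟨D, hD, hDx, -⟩ := hΔ₀ (e * x * e) 0
    obtain ⟨hex, hxe⟩ := (mem_corner_iff he.isIdempotentElem).1 (idem_mul_mul_idem_mem_corner e x)
    have h₀ : (Δ - D₀) e = 0 := sub_eq_zero.2 he₀
    rw [← eq_idem_mul_mul_idem_of_mem_corner he.isIdempotentElem
        (idem_mul_mul_idem_mem_corner e ((Δ - D₀) x)),
      hΔ₀.idem_mul_map_mul_idem he.isIdempotentElem h₀, hDx]
    exact he.idem_mul_map_mul_idem hD (hxe.trans hex.symm)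
  intro x y
  rw [mul_sub, sub_mul, mul_sub, sub_mul]
  simp only [compression_eq_zero, sub_zero]

end IsAbelianProjection

end AbelianProjection

section SquareZero

variable {A : Type*} [CStarAlgebra A] {e h x : A}

lemma commute_of_isSelfAdjoint_of_mul_self_eq_zero (he : IsIdempotentElem e)
    (hsq : ∀ y ∈ corner e, y * y = 0 → y = 0) (hh : IsSelfAdjoint h) (hhe : Commute h e)
    (hx : x ∈ corner e) : Commute h x := by
  obtain ⟨hex, hxe⟩ := (mem_corner_iff he).1 hx
  refine commute_of_cfc_mul_mul_cfc_eq_zero hh fun f g hf hg hfg => hsq _ ?_ ?_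
  · rw [mem_corner_iff he]
    refine ⟨?_, ?_⟩
    · rw [← mul_assoc, ← mul_assoc, ← (hhe.cfc_real f).eq, mul_assoc _ e, hex]
    · rw [mul_assoc, (hhe.cfc_real g).eq, ← mul_assoc, mul_assoc _ x, hxe]
  · have hgf : cfc g h * cfc f h = 0 := by
      rw [← cfc_mul g f h]
      simp only [mul_comm (g _), hfg, cfc_const_zero]
    rw [mul_assoc, ← mul_assoc (cfc g h), ← mul_assoc (cfc g h), hgf, zero_mul, zero_mul, mul_zero]

lemma isAbelianProjection_of_mul_self_eq_zero (he : IsStarProjection e)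
    (hsq : ∀ y ∈ corner e, y * y = 0 → y = 0) : IsAbelianProjection e := by
  refine ⟨he, fun x hx y hy => ?_⟩
  have hxe : Commute x e := by
    obtain ⟨hex, hxe⟩ := (mem_corner_iff he.isIdempotentElem).1 hx
    exact hxe.trans hex.symm
  rw [← realPart_add_I_smul_imaginaryPart x]
  exact (commute_of_isSelfAdjoint_of_mul_self_eq_zero he.isIdempotentElem hsq (realPart x).2
    (commute_realPart he.isSelfAdjoint hxe) hy).add_left
    ((commute_of_isSelfAdjoint_of_mul_self_eq_zero he.isIdempotentElem hsq (imaginaryPart x).2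
      (commute_imaginaryPart he.isSelfAdjoint hxe) hy).smul_left _)

end SquareZero

section Rickart

/-- `p` is the range projection of `a`: the projection whose left annihilator is that of `a`. -/
structure IsRangeProjection {A : Type*} [Ring A] [StarRing A] (p a : A) : Prop
    extends IsStarProjection p where
  mul_eq : p * a = a
  mul_eq_zero : ∀ x, x * a = 0 → x * p = 0

/-- A Rickart *-ring: every element has a range projection. Every von Neumann algebra is one. -/
class IsRickart (A : Type*) [Ring A] [StarRing A] : Prop where
  exists_isRangeProjection (a : A) : ∃ p, IsRangeProjection p a

lemma IsRangeProjection.commute {A : Type*} [Ring A] [StarRing A] {p a h : A}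
    (hp : IsRangeProjection p a) (hh : IsSelfAdjoint h) (ha : Commute h a) : Commute h p := by
  have hhp : (1 - p) * h * p = 0 := by
    refine hp.mul_eq_zero _ ?_
    rw [mul_assoc, ha.eq, ← mul_assoc, sub_mul, one_mul, hp.mul_eq, sub_self, zero_mul]
  have key : h * p = p * h * p := by
    rwa [sub_mul, one_mul, sub_mul, sub_eq_zero] at hhp
  refine key.trans ?_
  have := congr_arg star key
  simp only [star_mul, hh.star_eq, hp.isSelfAdjoint.star_eq, ← mul_assoc] at this
  exact this.symm

variable {A : Type*} [CStarAlgebra A] {h x : A}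

lemma exists_mem_spectrum_ne_zero (hh : IsSelfAdjoint h) (h0 : h ≠ 0) :
    ∃ t ∈ spectrum ℝ h, t ≠ 0 := by
  by_contra! ht
  refine h0 ?_
  rw [← cfc_id' ℝ h, cfc_congr (g := fun _ => 0) ht, cfc_const_zero]

lemma exists_continuous_mul_self_mul_eq {t : ℝ} (ht : 0 < t) : ∃ f k : ℝ → ℝ,
    Continuous f ∧ Continuous k ∧ f t ≠ 0 ∧ ∀ s, k s * k s * s * f s = f s := by
  have hmax_pos (s : ℝ) : 0 < max s (t / 2) := lt_max_of_lt_right (half_pos ht)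
  refine ⟨fun s => max (s - t / 2) 0, fun s => (√(max s (t / 2)))⁻¹, by fun_prop,
    (by fun_prop : Continuous fun s => √(max s (t / 2))).inv₀ fun s =>
      (Real.sqrt_pos.2 (hmax_pos s)).ne', (lt_max_of_lt_left (by linarith)).ne', fun s => ?_⟩
  rw [← mul_inv, Real.mul_self_sqrt (hmax_pos s).le]
  rcases le_total s (t / 2) with hs | hs
  · simp only [max_eq_right (sub_nonpos.2 hs), mul_zero]
  · rw [max_eq_left hs, inv_mul_cancel₀ (by linarith), one_mul]

variable [IsRickart A]

-- `q` is the inverse square root of `h` on the range of `p`.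
lemma exists_isStarProjection_mul_self_mul_eq (hh : IsSelfAdjoint h) {t : ℝ}
    (ht : t ∈ spectrum ℝ h) (ht0 : 0 < t) :
    ∃ p q : A, IsStarProjection p ∧ p ≠ 0 ∧ IsSelfAdjoint q ∧ Commute h q ∧ q * p = q ∧
      q * q * h = p := by
  obtain ⟨f, k, hf, hk, hft, hkkf⟩ := exists_continuous_mul_self_mul_eq ht0
  obtain ⟨p, hp⟩ := IsRickart.exists_isRangeProjection (cfc f h)
  have hp0 : p ≠ 0 := by
    rintro rfl
    have hfh : cfc f h = cfc (fun _ : ℝ => (0 : ℝ)) h := by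
      rw [cfc_const_zero, ← hp.mul_eq, zero_mul]
    exact hft ((cfc_eq_cfc_iff_eqOn (a := h)).1 hfh ht)
  set c := cfc k h
  have hc : IsSelfAdjoint c := cfc_predicate k h
  have hhc : Commute h c := ((Commute.refl h).cfc_real k).symm
  have hhp : Commute h p := hp.commute hh ((Commute.refl h).cfc_real f).symm
  have hcp : Commute c p := hp.commute hc (cfc_commute_cfc k f h)
  have hccf : c * c * h * cfc f h = cfc f h := by
    calc c * c * h * cfc f h = cfc (fun s => k s * k s * s * f s) h := by
          rw [cfc_mul (fun s => k s * k s * s) f h, cfc_mul (fun s => k s * k s) (fun s => s) h,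
            cfc_mul k k h, cfc_id' ℝ h]
      _ = cfc f h := by simp only [hkkf]
  have hccp : c * c * h * p = p := by
    have : (c * c * h - 1) * p = 0 :=
      hp.mul_eq_zero _ (by rw [sub_mul, hccf, one_mul, sub_self])
    rwa [sub_mul, one_mul, sub_eq_zero] at this
  refine ⟨p, c * p, hp.toIsStarProjection, hp0, hc.commute_iff hp.isSelfAdjoint |>.1 hcp,
    hhc.mul_right hhp, ?_, ?_⟩
  · rw [mul_assoc, hp.isIdempotentElem.eq]
  · rw [mul_assoc c p, ← mul_assoc p, ← hcp.eq, mul_assoc c p, hp.isIdempotentElem.eq,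
      ← mul_assoc, mul_assoc _ p, ← hhp.eq, ← mul_assoc, hccp]

lemma exists_partialIsometry (hx : x ≠ 0) :
    ∃ v : A, v ≠ 0 ∧ v * star v * v = v ∧ (∃ c, v = x * c) ∧ ∃ d, v = d * x := by
  obtain ⟨t, ht, ht0⟩ := exists_mem_spectrum_ne_zero (IsSelfAdjoint.star_mul_self x)
    ((CStarRing.star_mul_self_eq_zero_iff x).not.2 hx)
  obtain ⟨p, q, -, hp0, hq, hhq, hqp, hqqh⟩ :=
    exists_isStarProjection_mul_self_mul_eq (IsSelfAdjoint.star_mul_self x) ht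
      ((spectrum_star_mul_self_nonneg t ht).lt_of_ne' ht0)
  have hv : star (x * q) * (x * q) = p := by
    rw [← hqqh, star_mul, hq.star_eq, mul_assoc, ← mul_assoc (star x), hhq.eq, mul_assoc]
  refine ⟨x * q, ?_, ?_, ⟨q, rfl⟩, x * q * q * q * star x, ?_⟩
  · intro h0
    rw [h0, mul_zero] at hv
    exact hp0 hv.symm
  · rw [mul_assoc, hv, mul_assoc, hqp]
  · nth_rw 1 [← hqp, ← hqqh]
    simp only [mul_assoc]

end Rickart

section Compressions

lemma star_mul_eq_zero_of_mul_self_eq_zero {R : Type*} [Ring R] [StarRing R] {u v : R}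
    (hu : u * u = 0) (huv : star u * u * v = v) : star u * v = 0 := by
  rw [← huv, ← mul_assoc, ← mul_assoc, ← star_mul, hu, star_zero, zero_mul, zero_mul]

lemma isShift_of_mul_self_eq_zero {R : Type*} [Ring R] [StarRing R] {u v : R} (hu : u * u = 0)
    (hv : v * v = 0) (huv : star u * u * v = v) (hvu : v * (star u * u) = v)
    (hvv : v * star v * v = v) :
    IsShift (star v * v) (star v + v * star u) ![star v * v, v, u * (star v * v)] := by
  have star_v_star_v : star v * star v = 0 := by rw [← star_mul, hv, star_zero]
  have star_u_v : star u * v = 0 := star_mul_eq_zero_of_mul_self_eq_zero hu huv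
  have star_v_u : star v * u = 0 := by simpa using congr_arg star star_u_v
  have v_u : v * u = 0 := by rw [← hvu, mul_assoc, mul_assoc, hu, mul_zero, mul_zero]
  have star_u_star_v : star u * star v = 0 := by rw [← star_mul, v_u, star_zero]
  have star_v_v_star_v : star v * v * star v = star v := by
    simpa [mul_assoc] using congr_arg star hvv
  set e := star v * v with he
  set w := star v + v * star u with hw
  have w_v : w * v = e := by rw [hw, add_mul, mul_assoc, star_u_v, mul_zero, add_zero]
  have w_ue : w * (u * e) = v := by
    rw [← mul_assoc, hw, add_mul, star_v_u, zero_add, mul_assoc v, hvu, he, ← mul_assoc, hvv]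
  have e_w : e * w = star v := by
    rw [hw, mul_add, star_v_v_star_v, he, mul_assoc, ← mul_assoc v, hv, zero_mul, mul_zero,
      add_zero]
  have e_w_sq : e * w ^ 2 = e * star u := by
    rw [sq, ← mul_assoc, e_w, hw, mul_add, star_v_star_v, zero_add, ← mul_assoc]
  refine ⟨by rw [IsIdempotentElem, he, ← mul_assoc, star_v_v_star_v], fun i => ?_,
    fun {i j} hij => ?_⟩
  · fin_cases i
    · simp
    · simpa using w_v
    · simpa [sq, mul_assoc, w_ue] using w_v
  · have zero_one : e * v = 0 := by rw [he, mul_assoc, hv, mul_zero]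
    have zero_two : e * (u * e) = 0 := by
      rw [← mul_assoc, he, mul_assoc _ v u, v_u, mul_zero, zero_mul]
    have one_zero : star v * e = 0 := by rw [he, ← mul_assoc, star_v_star_v, zero_mul]
    have one_two : star v * (u * e) = 0 := by rw [← mul_assoc, star_v_u, zero_mul]
    have two_zero : e * star u * e = 0 := by
      rw [mul_assoc, he, ← mul_assoc (star u), star_u_star_v, zero_mul, mul_zero]
    have two_one : e * star u * v = 0 := by rw [mul_assoc, star_u_v, mul_zero]
    fin_cases i <;> fin_cases j <;> first
      | exact absurd rfl hij
      | simp [e_w, e_w_sq, zero_one, zero_two, one_zero, one_two, two_zero, two_one]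

end Compressions

section RickartTheorem

variable {A : Type*} [CStarAlgebra A] [IsRickart A] {Δ : A → A} {d e f x : A}

lemma exists_partialIsometry_mem_corner (he : IsIdempotentElem e) (hx : x ∈ corner e)
    (hx0 : x ≠ 0) (hxx : x * x = 0) :
    ∃ v ∈ corner e, v ≠ 0 ∧ v * v = 0 ∧ v * star v * v = v := by
  obtain ⟨hex, hxe⟩ := (mem_corner_iff he).1 hx
  obtain ⟨v, hv0, hvv, ⟨c, hc⟩, d, hd⟩ := exists_partialIsometry hx0
  refine ⟨v, (mem_corner_iff he).2 ⟨?_, ?_⟩, hv0, ?_, hvv⟩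
  · rw [hc, ← mul_assoc, hex]
  · rw [hd, mul_assoc, hxe]
  · nth_rw 1 [hd]
    rw [hc, mul_assoc, ← mul_assoc x, hxx, zero_mul, mul_zero]

-- Either `f` or a subprojection is abelian, or two successive splittings give a shift of order 3.
theorem exists_isCompressionAdditive (hΔ : Is2LocalDerivation Δ) (hf : IsStarProjection f)
    (hf0 : f ≠ 0) :
    ∃ e, IsSelfAdjoint e ∧ e ≠ 0 ∧ f * e = e ∧ IsCompressionAdditive Δ e := by
  by_cases hf_ab : ∀ x ∈ corner f, x * x = 0 → x = 0
  · exact ⟨f, hf.isSelfAdjoint, hf0, hf.isIdempotentElem.eq,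
      (isAbelianProjection_of_mul_self_eq_zero hf hf_ab).isCompressionAdditive hΔ⟩
  push Not at hf_ab
  obtain ⟨x, hx, hxx, hx0⟩ := hf_ab
  obtain ⟨u, hu, hu0, huu, hu_pi⟩ :=
    exists_partialIsometry_mem_corner hf.isIdempotentElem hx hx0 hxx
  have hp : IsStarProjection (star u * u) :=
    ⟨by rw [IsIdempotentElem, mul_assoc, ← mul_assoc u, hu_pi], .star_mul_self u⟩
  have hfp : f * (star u * u) = star u * u := by
    have := congr_arg star ((mem_corner_iff hf.isIdempotentElem).1 hu).2
    rw [star_mul, hf.isSelfAdjoint.star_eq] at this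
    rw [← mul_assoc, this]
  by_cases hp_ab : ∀ x ∈ corner (star u * u), x * x = 0 → x = 0
  · exact ⟨star u * u, hp.isSelfAdjoint, (CStarRing.star_mul_self_eq_zero_iff u).not.2 hu0, hfp,
      (isAbelianProjection_of_mul_self_eq_zero hp hp_ab).isCompressionAdditive hΔ⟩
  push Not at hp_ab
  obtain ⟨y, hy, hyy, hy0⟩ := hp_ab
  obtain ⟨v, hv, hv0, hvv, hv_pi⟩ :=
    exists_partialIsometry_mem_corner hp.isIdempotentElem hy hy0 hyy
  obtain ⟨hpv, hvp⟩ := (mem_corner_iff hp.isIdempotentElem).1 hv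
  refine ⟨star v * v, .star_mul_self v, (CStarRing.star_mul_self_eq_zero_iff v).not.2 hv0, ?_,
    (isShift_of_mul_self_eq_zero huu hvv hpv hvp hv_pi).isCompressionAdditive hΔ⟩
  have : star u * u * star v = star v := by simpa [mul_assoc] using congr_arg star hvp
  rw [← this, ← mul_assoc, ← mul_assoc, hfp]

lemma exists_idem_mul_mul_ne_zero (hd : IsSelfAdjoint d) {t : ℝ} (ht : t ∈ spectrum ℝ d)
    (ht0 : 0 < t) :
    ∃ f, IsStarProjection f ∧ f ≠ 0 ∧
      ∀ e, IsSelfAdjoint e → f * e = e → e * d * e = 0 → e = 0 := by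
  obtain ⟨p, q, hp, hp0, hq, hdq, -, hqqd⟩ := exists_isStarProjection_mul_self_mul_eq hd ht ht0
  refine ⟨p, hp, hp0, fun e he hpe hede => ?_⟩
  have hqd : IsSelfAdjoint (d * q) := (hd.commute_iff hq).1 hdq
  have sq_eq : star (d * q * e) * (d * q * e) = e * d * e := by
    have : d * q * (d * q) = d * p := by
      rw [← hqqd]
      simp only [mul_assoc, hdq.eq, hdq.left_comm]
    rw [star_mul, hqd.star_eq, he.star_eq, mul_assoc, ← mul_assoc (d * q), this, mul_assoc d, hpe,
      mul_assoc]
  rw [hede, CStarRing.star_mul_self_eq_zero_iff] at sq_eq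
  rw [← hpe, ← hqqd, mul_assoc q q, ← hdq.eq, mul_assoc, sq_eq, mul_zero]

lemma eq_zero_of_forall_isStarProjection_of_isSelfAdjoint (hd : IsSelfAdjoint d)
    (h : ∀ f, IsStarProjection f → f ≠ 0 →
      ∃ e, IsSelfAdjoint e ∧ e ≠ 0 ∧ f * e = e ∧ e * d * e = 0) : d = 0 := by
  by_contra hd0
  obtain ⟨t, ht, ht0⟩ := exists_mem_spectrum_ne_zero hd hd0
  rcases ht0.lt_or_gt with ht0 | ht0
  · have ht' : -t ∈ spectrum ℝ (-d) := by rwa [← spectrum.neg_eq, Set.neg_mem_neg]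
    obtain ⟨f, hf, hf0, hfd⟩ := exists_idem_mul_mul_ne_zero hd.neg ht' (neg_pos.2 ht0)
    obtain ⟨e, he, he0, hfe, hede⟩ := h f hf hf0
    exact he0 (hfd e he hfe (by rw [mul_neg, neg_mul, hede, neg_zero]))
  · obtain ⟨f, hf, hf0, hfd⟩ := exists_idem_mul_mul_ne_zero hd ht ht0
    obtain ⟨e, he, he0, hfe, hede⟩ := h f hf hf0
    exact he0 (hfd e he hfe hede)

theorem eq_zero_of_forall_isStarProjection
    (h : ∀ f, IsStarProjection f → f ≠ 0 →
      ∃ e, IsSelfAdjoint e ∧ e ≠ 0 ∧ f * e = e ∧ e * d * e = 0) : d = 0 := by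
  rw [← realPart_add_I_smul_imaginaryPart d,
    eq_zero_of_forall_isStarProjection_of_isSelfAdjoint (realPart d).2 ?_,
    eq_zero_of_forall_isStarProjection_of_isSelfAdjoint (imaginaryPart d).2 ?_,
    smul_zero, add_zero]
  all_goals
    intro f hf hf0
    obtain ⟨e, he, he0, hfe, hede⟩ := h f hf hf0
    have hede' : e * star d * e = 0 := by
      simpa [he.star_eq, mul_assoc] using congr_arg star hede
    refine ⟨e, he, he0, hfe, ?_⟩
    simp [realPart_apply_coe, imaginaryPart_apply_coe, mul_add, add_mul, mul_sub, sub_mul, hede,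
      hede']

theorem Is2LocalDerivation.isCDerivation (hΔ : Is2LocalDerivation Δ) : IsCDerivation Δ := by
  refine hΔ.isCDerivation_of_map_add fun x y => ?_
  rw [← sub_eq_zero, ← sub_sub]
  refine eq_zero_of_forall_isStarProjection fun f hf hf0 => ?_
  obtain ⟨e, he, he0, hfe, hadd⟩ := exists_isCompressionAdditive hΔ hf hf0
  exact ⟨e, he, he0, hfe, hadd x y⟩

end RickartTheorem

section ContinuousFunctions

lemma continuous_inv_sqrt_norm_smul {E : Type*} [NormedAddCommGroup E] [NormedSpace ℝ E] :
    Continuous fun x : E => (√‖x‖)⁻¹ • x := by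
  refine continuous_iff_continuousAt.2 fun x => ?_
  rcases eq_or_ne x 0 with rfl | hx
  · have norm_eq (y : E) : ‖(√‖y‖)⁻¹ • y‖ = √‖y‖ := by
      rw [norm_smul, norm_inv, Real.norm_of_nonneg (Real.sqrt_nonneg _), ← div_eq_inv_mul,
        Real.div_sqrt]
    rw [ContinuousAt, smul_zero, tendsto_zero_iff_norm_tendsto_zero]
    simp only [norm_eq]
    exact Continuous.tendsto' (by fun_prop) _ _ (by simp)
  · exact ((continuous_norm.sqrt.continuousAt).inv₀ (Real.sqrt_ne_zero'.2 (norm_pos_iff.2 hx))).smul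
      continuousAt_id

variable {Ω A : Type*} [TopologicalSpace Ω] [NormedRing A] [NormedAlgebra ℂ A]
  {f g : C(Ω, A)} {t : Ω}

lemma exists_eq_mul_of_apply_eq_zero (hf : f t = 0) :
    ∃ g h : C(Ω, A), f = g * h ∧ g t = 0 ∧ h t = 0 := by
  refine ⟨⟨fun s => √‖f s‖ • 1, by fun_prop⟩, ⟨fun s => (√‖f s‖)⁻¹ • f s,
    continuous_inv_sqrt_norm_smul.comp f.continuous⟩, ?_, by simp [hf], by simp [hf]⟩
  ext s
  rcases eq_or_ne (f s) 0 with hs | hs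
  · simp [hs]
  · simp [smul_smul, inv_mul_cancel₀ (Real.sqrt_ne_zero'.2 (norm_pos_iff.2 hs))]

variable [CompactSpace Ω] {D Δ : C(Ω, A) → C(Ω, A)}

namespace IsCDerivation

lemma apply_eq_zero (hD : IsCDerivation D) (hf : f t = 0) : D f t = 0 := by
  obtain ⟨g, h, rfl, hg, hh⟩ := exists_eq_mul_of_apply_eq_zero hf
  simp [hD.map_mul, hg, hh]

lemma apply_congr (hD : IsCDerivation D) (hfg : f t = g t) : D f t = D g t := by
  rw [← sub_eq_zero, ← ContinuousMap.sub_apply, ← hD.map_sub]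
  exact hD.apply_eq_zero (sub_eq_zero.2 hfg)

lemma apply_const (hD : IsCDerivation D) (t : Ω) :
    IsCDerivation fun a : A => D (ContinuousMap.const Ω a) t :=
  ⟨fun a b => congr_arg (· t) (hD.map_add (.const Ω a) (.const Ω b)),
    fun c a => congr_arg (· t) (hD.map_smul c (.const Ω a)),
    fun a b => congr_arg (· t) (hD.map_mul (.const Ω a) (.const Ω b))⟩

end IsCDerivation

namespace Is2LocalDerivation

lemma apply_eq_apply_const (hΔ : Is2LocalDerivation Δ) (f : C(Ω, A)) (t : Ω) :
    Δ f t = Δ (.const Ω (f t)) t := by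
  obtain ⟨D, hD, hf, hc⟩ := hΔ f (.const Ω (f t))
  rw [hf, hc]
  exact hD.apply_congr rfl

lemma apply_const (hΔ : Is2LocalDerivation Δ) (t : Ω) :
    Is2LocalDerivation fun a : A => Δ (.const Ω a) t := by
  intro a b
  obtain ⟨D, hD, ha, hb⟩ := hΔ (.const Ω a) (.const Ω b)
  exact ⟨_, hD.apply_const t, congr_arg (· t) ha, congr_arg (· t) hb⟩

theorem isCDerivation_of_forall_isCDerivation (hΔ : Is2LocalDerivation Δ)
    (hA : ∀ δ : A → A, Is2LocalDerivation δ → IsCDerivation δ) : IsCDerivation Δ := by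
  have fiber (t : Ω) := hA _ (hΔ.apply_const t)
  refine ⟨fun f g => ?_, fun c f => ?_, fun f g => ?_⟩ <;> ext t
  · rw [ContinuousMap.add_apply, hΔ.apply_eq_apply_const (f + g), hΔ.apply_eq_apply_const f,
      hΔ.apply_eq_apply_const g]
    exact (fiber t).map_add (f t) (g t)
  · rw [ContinuousMap.smul_apply, hΔ.apply_eq_apply_const (c • f), hΔ.apply_eq_apply_const f]
    exact (fiber t).map_smul c (f t)
  · rw [ContinuousMap.add_apply, ContinuousMap.mul_apply, ContinuousMap.mul_apply,
      hΔ.apply_eq_apply_const (f * g), hΔ.apply_eq_apply_const f, hΔ.apply_eq_apply_const g]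
    exact (fiber t).map_mul (f t) (g t)

end Is2LocalDerivation

end ContinuousFunctions

section VonNeumann

variable {H : Type*} [NormedAddCommGroup H] [InnerProductSpace ℂ H] [CompleteSpace H]

lemma starProjection_topologicalClosure_range_mem (M : VonNeumannAlgebra H) {T : H →L[ℂ] H}
    (hT : T ∈ M) : T.range.topologicalClosure.starProjection ∈ M := by
  rw [VonNeumannAlgebra.IsStarProjection.mem_iff isStarProjection_starProjection]
  intro y hy
  rw [Submodule.range_starProjection, Module.End.mem_invtSubmodule]
  have hTy : T * y = y * T := VonNeumannAlgebra.mem_commutant_iff.1 hy T hT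
  have mapsTo : Set.MapsTo y (T.range : Set H) (T.range : Set H) := by
    rintro _ ⟨w, rfl⟩
    exact ⟨y w, DFunLike.congr_fun hTy w⟩
  exact fun z hz => mapsTo.closure y.continuous hz

lemma isRangeProjection_starProjection (T : H →L[ℂ] H) :
    IsRangeProjection T.range.topologicalClosure.starProjection T where
  toIsStarProjection := isStarProjection_starProjection
  mul_eq := by
    ext w
    exact Submodule.starProjection_eq_self_iff.2 (T.range.le_topologicalClosure ⟨w, rfl⟩)
  mul_eq_zero X hX := by
    have hle : T.range.topologicalClosure ≤ X.ker := by
      refine Submodule.topologicalClosure_minimal _ ?_ X.isClosed_ker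
      rintro _ ⟨w, rfl⟩
      exact DFunLike.congr_fun hX w
    ext w
    exact hle (Submodule.starProjection_apply_mem _ w)

instance (M : VonNeumannAlgebra H) : IsRickart M.toStarSubalgebra where
  exists_isRangeProjection a := by
    have h := isRangeProjection_starProjection a.1
    exact ⟨⟨_, starProjection_topologicalClosure_range_mem M a.2⟩,
      ⟨Subtype.ext h.isIdempotentElem, Subtype.ext h.isSelfAdjoint⟩, Subtype.ext h.mul_eq,
      fun x hx => Subtype.ext (h.mul_eq_zero x.1 (congr_arg Subtype.val hx))⟩

lemma isClosed_toStarSubalgebra (M : VonNeumannAlgebra H) :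
    IsClosed (M.toStarSubalgebra : Set (H →L[ℂ] H)) := by
  have h := Set.isClosed_centralizer (Set.centralizer (M : Set (H →L[ℂ] H)))
  rwa [M.centralizer_centralizer] at h

noncomputable instance (M : VonNeumannAlgebra H) : CStarAlgebra M.toStarSubalgebra :=
  StarSubalgebra.cstarAlgebra M.toStarSubalgebra (h_closed := isClosed_toStarSubalgebra M)

end VonNeumann

theorem stmt17_general {Ω A : Type*} [TopologicalSpace Ω] [CompactSpace Ω] [CStarAlgebra A]
    [IsRickart A] (Δ : C(Ω, A) → C(Ω, A)) (hΔ : Is2LocalDerivation Δ) : IsCDerivation Δ :=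
  hΔ.isCDerivation_of_forall_isCDerivation fun _ hδ => hδ.isCDerivation

theorem stmt17 {Ω H : Type*} [TopologicalSpace Ω] [CompactSpace Ω] [T2Space Ω]
    [NormedAddCommGroup H] [InnerProductSpace ℂ H] [CompleteSpace H]
    (M : VonNeumannAlgebra H)
    (Δ : C(Ω, M) → C(Ω, M)) (hΔ : Is2LocalDerivation Δ) :
    IsCDerivation Δ :=
  stmt17_general (A := M.toStarSubalgebra) Δ hΔ
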